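/- Let 0 < μ ≤ L, let 0 < α ≤ μ/L, and let x* ∈ ℝ^d. Let (g_k)_{k≥0} be a sequence of differentiable functions g_k : ℝ^d → ℝ, each μ-strongly convex with L-Lipschitz gradient and satisfying ∇g_k(x*) = 0. Let x⁰ ∈ ℝ^d with x⁰ ≠ x*, let λ₀ > 0, set x¹ = x⁰ − λ₀∇g₀(x⁰), λ₁ = α‖x¹ − x⁰‖/‖∇g₁(x¹) − ∇g₁(x⁰)‖, and for k ≥ 1 define x^{k+1} = x^k − λ_k∇g_k(x^k) and, for k ≥ 2, λ_k = min{√(1 + θ_{k−1})·λ_{k−1}, α‖x^k − x^{k−1}‖/‖∇g_k(x^k) − ∇g_k(x^{k−1})‖} when ∇g_k(x^k) ≠ ∇g_k(x^{k−1}) and λ_k = √(1 + θ_{k−1})·λ_{k−1} otherwise, where θ_k = λ_k/λ_{k−1}. Then for every k ≥ 1, ‖x^{k+1} − x*‖² ≤ exp(−kαμ/L) · 2(1 + λ₀²L²)‖x⁰ − x*‖². -/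

import Mathlib

open scoped RealInnerProductSpace

theorem aux_descent {d : ℕ} (L : ℝ) (f : EuclideanSpace ℝ (Fin d) → ℝ)
    (f' : EuclideanSpace ℝ (Fin d) → EuclideanSpace ℝ (Fin d))
    (hdiff : ∀ x, HasGradientAt f (f' x) x)
    (hLip : ∀ x y, ‖f' x - f' y‖ ≤ L * ‖x - y‖) (x v : EuclideanSpace ℝ (Fin d)) :
    f (x + v) ≤ f x + ⟪f' x, v⟫ + L / 2 * ‖v‖ ^ 2 := by
  have hd : ∀ t : ℝ, HasDerivAt
      (fun t : ℝ => f (x + t • v) - t * ⟪f' x, v⟫ - t ^ 2 * (L / 2 * ‖v‖ ^ 2))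
      (⟪f' (x + t • v), v⟫ - ⟪f' x, v⟫ - 2 * t * (L / 2 * ‖v‖ ^ 2)) t := by
    intro t
    have h1 : HasDerivAt (fun t : ℝ => x + t • v) v t := by
      simpa using ((hasDerivAt_id t).smul_const v).const_add x
    have h2 := (hdiff (x + t • v)).hasFDerivAt.comp_hasDerivAt t h1
    have h3 : HasDerivAt (fun t : ℝ => t * ⟪f' x, v⟫) ⟪f' x, v⟫ t := by
      simpa using (hasDerivAt_id t).mul_const ⟪f' x, v⟫
    have h4 : HasDerivAt (fun t : ℝ => t ^ 2 * (L / 2 * ‖v‖ ^ 2)) (2 * t * (L / 2 * ‖v‖ ^ 2)) t := by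
      simpa using (hasDerivAt_pow 2 t).mul_const (L / 2 * ‖v‖ ^ 2)
    have h5 := (h2.sub h3).sub h4
    simp only [InnerProductSpace.toDual_apply_apply] at h5
    exact h5
  have ha : AntitoneOn (fun t : ℝ => f (x + t • v) - t * ⟪f' x, v⟫ - t ^ 2 * (L / 2 * ‖v‖ ^ 2))
      (Set.Icc 0 1) := by
    apply antitoneOn_of_deriv_nonpos (convex_Icc 0 1)
    · exact fun t _ => (hd t).continuousAt.continuousWithinAt
    · exact fun t _ => (hd t).differentiableAt.differentiableWithinAt
    · intro t ht
      rw [interior_Icc] at ht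
      rw [(hd t).deriv, ← inner_sub_left]
      have h1 := real_inner_le_norm (f' (x + t • v) - f' x) v
      have h2 := hLip (x + t • v) x
      rw [add_sub_cancel_left, norm_smul, Real.norm_of_nonneg ht.1.le] at h2
      have h3 := mul_le_mul_of_nonneg_right h2 (norm_nonneg v)
      nlinarith
  have := ha (Set.left_mem_Icc.2 zero_le_one) (Set.right_mem_Icc.2 zero_le_one) zero_le_one
  simp at this
  linarith

theorem aux_step {d : ℕ} (mu L lam : ℝ) (hmu : 0 < mu) (hL : 0 < L)
    (f : EuclideanSpace ℝ (Fin d) → ℝ)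
    (f' : EuclideanSpace ℝ (Fin d) → EuclideanSpace ℝ (Fin d))
    (hdiff : ∀ x, HasGradientAt f (f' x) x)
    (hsc : ∀ x y, f x + ⟪f' x, y - x⟫ + mu / 2 * ‖y - x‖ ^ 2 ≤ f y)
    (hLip : ∀ x y, ‖f' x - f' y‖ ≤ L * ‖x - y‖) (xs x : EuclideanSpace ℝ (Fin d))
    (hs : f' xs = 0) (h0 : 0 ≤ lam) (h1 : lam * L ≤ 1) :
    ‖x - lam • f' x - xs‖ ^ 2 ≤ (1 - lam * mu) * ‖x - xs‖ ^ 2 := by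
  have a1 := aux_descent L f f' hdiff hLip x (-(L⁻¹ • f' x))
  have a2 := hsc xs (x + -(L⁻¹ • f' x))
  have a3 := hsc x xs
  have hp : 0 ≤ mu / 2 * ‖x + -(L⁻¹ • f' x) - xs‖ ^ 2 := by positivity
  rw [hs, inner_zero_left] at a2
  rw [inner_neg_right, inner_smul_right, real_inner_self_eq_norm_sq, norm_neg, norm_smul,
    Real.norm_of_nonneg (by positivity), mul_pow] at a1
  have e : ⟪f' x, xs - x⟫ = -⟪f' x, x - xs⟫ := by rw [← inner_neg_right, neg_sub]
  rw [e, norm_sub_rev] at a3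
  have e2 : L / 2 * (L⁻¹ ^ 2 * ‖f' x‖ ^ 2) = L⁻¹ * ‖f' x‖ ^ 2 / 2 := by field_simp
  rw [e2] at a1
  have e3 : x - lam • f' x - xs = (x - xs) - lam • f' x := by abel
  rw [e3, norm_sub_sq_real, inner_smul_right, norm_smul, mul_pow, Real.norm_eq_abs, sq_abs,
    real_inner_comm]
  have k1 : L⁻¹ * ‖f' x‖ ^ 2 + mu * ‖x - xs‖ ^ 2 ≤ 2 * ⟪f' x, x - xs⟫ := by linarith
  have k2 := mul_le_mul_of_nonneg_left k1 h0
  have k3 : lam ≤ L⁻¹ := by rw [← one_div, le_div_iff₀ hL]; exact h1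
  have k4 : lam * (lam * ‖f' x‖ ^ 2) ≤ lam * (L⁻¹ * ‖f' x‖ ^ 2) := by gcongr
  linarith

theorem aux_mono {d : ℕ} (mu : ℝ)
    (f : EuclideanSpace ℝ (Fin d) → ℝ)
    (f' : EuclideanSpace ℝ (Fin d) → EuclideanSpace ℝ (Fin d))
    (hsc : ∀ x y, f x + ⟪f' x, y - x⟫ + mu / 2 * ‖y - x‖ ^ 2 ≤ f y)
    (x y : EuclideanSpace ℝ (Fin d)) :
    mu * ‖x - y‖ ≤ ‖f' x - f' y‖ := by
  rcases (norm_nonneg (x - y)).eq_or_lt with h | h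
  · rw [← h]; simp
  have a1 := hsc x y
  have a2 := hsc y x
  have e : ⟪f' x, y - x⟫ = -⟪f' x, x - y⟫ := by rw [← inner_neg_right, neg_sub]
  rw [e, norm_sub_rev] at a1
  have a3 := real_inner_le_norm (f' x - f' y) (x - y)
  rw [inner_sub_left] at a3
  refine le_of_mul_le_mul_right ?_ h
  nlinarith

theorem aux_ratio (mu L alpha a b : ℝ) (hmu : 0 < mu) (hL : 0 < L) (hal : 0 < alpha)
    (ha : 0 < a) (h1 : mu * a ≤ b) (h2 : b ≤ L * a) :
    alpha / L ≤ alpha * a / b ∧ alpha * a / b ≤ alpha / mu := by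
  have hb : 0 < b := lt_of_lt_of_le (by positivity) h1
  constructor
  · rw [div_le_div_iff₀ hL hb]; nlinarith
  · rw [div_le_div_iff₀ hb hmu]; nlinarith

/-- Linear convergence of adaptive SGD in the overparameterized regime (same-sample
estimates), stated pathwise for a sequence of sampled functions `g_k` each of which is
`μ`-strongly convex, has `L`-Lipschitz gradient, and satisfies `∇g_k(x*) = 0`. -/
theorem adaptive_sgd_overparameterized {d : ℕ}
    (mu L alpha : ℝ) (hmu : 0 < mu) (hmuL : mu ≤ L)
    (halpha0 : 0 < alpha) (halpha1 : alpha ≤ mu / L)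
    (xstar : EuclideanSpace ℝ (Fin d))
    (g : ℕ → EuclideanSpace ℝ (Fin d) → ℝ)
    (g' : ℕ → EuclideanSpace ℝ (Fin d) → EuclideanSpace ℝ (Fin d))
    (hdiff : ∀ k x, HasGradientAt (g k) (g' k x) x)
    (hsc : ∀ k x y, g k x + ⟪g' k x, y - x⟫ + mu / 2 * ‖y - x‖ ^ 2 ≤ g k y)
    (hLip : ∀ k x y, ‖g' k x - g' k y‖ ≤ L * ‖x - y‖)
    (hstar : ∀ k, g' k xstar = 0)
    (x : ℕ → EuclideanSpace ℝ (Fin d)) (lam : ℕ → ℝ)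
    (hx0 : x 0 ≠ xstar) (hl0 : 0 < lam 0)
    (hx1 : x 1 = x 0 - lam 0 • g' 0 (x 0))
    (hl1 : lam 1 = alpha * ‖x 1 - x 0‖ / ‖g' 1 (x 1) - g' 1 (x 0)‖)
    (hupd : ∀ k, 1 ≤ k → x (k + 1) = x k - lam k • g' k (x k))
    (hrec : ∀ k, 2 ≤ k →
      (g' k (x k) ≠ g' k (x (k - 1)) →
        lam k = min (Real.sqrt (1 + lam (k - 1) / lam (k - 2)) * lam (k - 1))
          (alpha * ‖x k - x (k - 1)‖ / ‖g' k (x k) - g' k (x (k - 1))‖)) ∧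
      (g' k (x k) = g' k (x (k - 1)) →
        lam k = Real.sqrt (1 + lam (k - 1) / lam (k - 2)) * lam (k - 1))) :
    ∀ k, 1 ≤ k →
      ‖x (k + 1) - xstar‖ ^ 2 ≤
        Real.exp (-(k : ℝ) * alpha * mu / L) * (2 * (1 + lam 0 ^ 2 * L ^ 2) * ‖x 0 - xstar‖ ^ 2) := by
  have hL : 0 < L := hmu.trans_le hmuL
  have hne : ∀ k y, y ≠ xstar → g' k y ≠ 0 := by
    intro k y hy h
    have := aux_mono mu (g k) (g' k) (hsc k) y xstar
    rw [h, hstar, sub_zero, norm_zero] at this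
    have h2 : 0 < ‖y - xstar‖ := norm_pos_iff.2 (sub_ne_zero.2 hy)
    nlinarith
  have hrat : ∀ k y z, y ≠ z → alpha / L ≤ alpha * ‖y - z‖ / ‖g' k y - g' k z‖ ∧
      alpha * ‖y - z‖ / ‖g' k y - g' k z‖ ≤ alpha / mu := by
    intro k y z h
    exact aux_ratio mu L alpha _ _ hmu hL halpha0 (norm_pos_iff.2 (sub_ne_zero.2 h))
      (aux_mono mu (g k) (g' k) (hsc k) y z) (hLip k y z)
  have haL : 0 < alpha / L := by positivity
  have hQ : ∀ k, x (k + 1) = xstar ∨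
      (0 < lam k ∧ alpha / L ≤ lam (k + 1) ∧ lam (k + 1) ≤ alpha / mu) := by
    intro k
    induction k with
    | zero =>
      right
      have h10 : x 1 ≠ x 0 := by
        rw [hx1]
        intro h
        rw [sub_eq_self, smul_eq_zero] at h
        exact h.elim hl0.ne' (hne 0 _ hx0)
      have := hrat 1 _ _ h10
      rw [← hl1] at this
      exact ⟨hl0, this⟩
    | succ k ih =>
      have hu := hupd (k + 1) (by omega)
      rcases ih with h | ⟨hp, hlo, hhi⟩
      · left
        rw [hu, h, hstar, smul_zero, sub_zero]
      by_cases hx : x (k + 1) = xstar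
      · left
        rw [hu, hx, hstar, smul_zero, sub_zero]
      right
      have hl : 0 < lam (k + 1) := haL.trans_le hlo
      have hdx : x (k + 1 + 1) ≠ x (k + 1) := by
        rw [hu]
        intro h
        rw [sub_eq_self, smul_eq_zero] at h
        exact h.elim hl.ne' (hne _ _ hx)
      have hr := hrat (k + 1 + 1) _ _ hdx
      have hg : g' (k + 1 + 1) (x (k + 1 + 1)) ≠ g' (k + 1 + 1) (x (k + 1)) := by
        intro h
        have := aux_mono mu _ _ (hsc (k + 1 + 1)) (x (k + 1 + 1)) (x (k + 1))
        rw [h, sub_self, norm_zero] at this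
        have h2 : 0 < ‖x (k + 1 + 1) - x (k + 1)‖ := norm_pos_iff.2 (sub_ne_zero.2 hdx)
        nlinarith
      have hm := (hrec (k + 1 + 1) (by omega)).1 hg
      simp only [show k + 1 + 1 - 1 = k + 1 by omega, show k + 1 + 1 - 2 = k by omega] at hm
      refine ⟨hl, ?_, ?_⟩
      · rw [hm]
        refine le_min ?_ hr.1
        have hs : 1 ≤ Real.sqrt (1 + lam (k + 1) / lam k) := by
          rw [Real.one_le_sqrt]
          have : 0 < lam (k + 1) / lam k := div_pos hl hp
          linarith
        nlinarith
      · rw [hm]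
        exact (min_le_right _ _).trans hr.2
  have hstep : ∀ k, ‖x (k + 1 + 1) - xstar‖ ^ 2 ≤
      Real.exp (-(alpha * mu / L)) * ‖x (k + 1) - xstar‖ ^ 2 := by
    intro k
    have hu := hupd (k + 1) (by omega)
    rcases hQ k with h | ⟨hp, hlo, hhi⟩
    · rw [hu, h, hstar, smul_zero, sub_zero, sub_self]; simp
    have hlL : lam (k + 1) * L ≤ 1 := by
      rw [le_div_iff₀ hL] at halpha1
      rw [le_div_iff₀ hmu] at hhi
      have : lam (k + 1) * mu * L ≤ alpha * L := by gcongr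
      by_contra! hc
      nlinarith
    rw [hu]
    refine (aux_step mu L _ hmu hL _ _ (hdiff _) (hsc _) (hLip _) xstar _ (hstar _)
      (haL.le.trans hlo) hlL).trans ?_
    gcongr
    have h1 := Real.add_one_le_exp (-(alpha * mu / L))
    have h2 : alpha / L * mu ≤ lam (k + 1) * mu := by gcongr
    have h3 : alpha / L * mu = alpha * mu / L := by ring
    linarith
  have hx1b : ‖x 1 - xstar‖ ^ 2 ≤ 2 * (1 + lam 0 ^ 2 * L ^ 2) * ‖x 0 - xstar‖ ^ 2 := by
    have e : x 1 - xstar = (x 0 - xstar) - lam 0 • g' 0 (x 0) := by rw [hx1]; abel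
    have h1 := norm_sub_le (x 0 - xstar) (lam 0 • g' 0 (x 0))
    rw [← e, norm_smul, Real.norm_of_nonneg hl0.le] at h1
    have h2 := hLip 0 (x 0) xstar
    rw [hstar, sub_zero] at h2
    have h3 : ‖x 1 - xstar‖ ≤ ‖x 0 - xstar‖ + lam 0 * (L * ‖x 0 - xstar‖) :=
      h1.trans (by gcongr)
    have h4 : ‖x 1 - xstar‖ ^ 2 ≤ (‖x 0 - xstar‖ + lam 0 * (L * ‖x 0 - xstar‖)) ^ 2 := by gcongr
    nlinarith [sq_nonneg (‖x 0 - xstar‖ - lam 0 * (L * ‖x 0 - xstar‖))]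
  have hall : ∀ k : ℕ, ‖x (k + 1) - xstar‖ ^ 2 ≤
      Real.exp (-(k : ℝ) * alpha * mu / L) *
        (2 * (1 + lam 0 ^ 2 * L ^ 2) * ‖x 0 - xstar‖ ^ 2) := by
    intro k
    induction k with
    | zero => simpa using hx1b
    | succ k ih =>
      refine (hstep k).trans ?_
      have e : Real.exp (-((k + 1 : ℕ) : ℝ) * alpha * mu / L) =
          Real.exp (-(alpha * mu / L)) * Real.exp (-(k : ℝ) * alpha * mu / L) := by
        rw [← Real.exp_add]; congr 1; push_cast; ring
      rw [e, mul_assoc]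
      gcongr
  exact fun k _ => hall k
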